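/- arXiv:2101.04419 — 2 statements merged into one kernel-verified Lean document; each statement's English description precedes it below -/
import Mathlib

section
/- If X is an invertible symmetric k×k matrix over A⁰ (Xᵀ = X), then β^{4n+3}_X = 0 for all n ≥ 0; thus for symmetric X the only potentially nonzero invariant traces in odd degree are β^{4n+1}_X. -/
/-!
Write `D` for the entrywise differential of `X`, so that `μ = Y * D`. Transposing a product of
matrices with homogeneous entries of degrees `m` and `n` reverses the factors at the cost of the
Koszul sign `(-1) ^ (m * n)` (`transpose_mul_of_graded`). Since `X`, hence also `D` and `Y`, is
symmetric, reversing the `N` degree-one factors of `μ ^ N` gives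
`(μ ^ N)ᵀ = (-1) ^ (N.choose 2) • (D * Y) ^ N` (`transpose_pow_of_graded`). The entries of `Y` have
degree zero, so the trace is cyclic with respect to `Y` without a sign, and `(D * Y) ^ N` has the
same trace as `(Y * D) ^ N = μ ^ N`. For `N = 4 * n + 3` the number `N.choose 2` is odd, so the
trace of `μ ^ N` equals its own negative, which forces it to vanish over `ℚ`.
-/

open Matrix

theorem mul_mem_graded
    {A : Type*} [Ring A] [Algebra ℚ A] (𝒜 : ℕ → Submodule ℚ A)
    (hgmul : ∀ (m n : ℕ), ∀ a ∈ 𝒜 m, ∀ b ∈ 𝒜 n, a * b ∈ 𝒜 (m + n))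
    {k m n : ℕ} {M N : Matrix (Fin k) (Fin k) A}
    (hM : ∀ i j, M i j ∈ 𝒜 m) (hN : ∀ i j, N i j ∈ 𝒜 n) (i j : Fin k) :
    (M * N) i j ∈ 𝒜 (m + n) := by
  rw [Matrix.mul_apply]
  exact Submodule.sum_mem _ fun l _ => hgmul m n _ (hM i l) _ (hN l j)

theorem pow_mem_graded
    {A : Type*} [Ring A] [Algebra ℚ A] (𝒜 : ℕ → Submodule ℚ A)
    (hone : (1 : A) ∈ 𝒜 0)
    (hgmul : ∀ (m n : ℕ), ∀ a ∈ 𝒜 m, ∀ b ∈ 𝒜 n, a * b ∈ 𝒜 (m + n))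
    {k : ℕ} {M : Matrix (Fin k) (Fin k) A} (hM : ∀ i j, M i j ∈ 𝒜 1) (N : ℕ) :
    ∀ i j, (M ^ N) i j ∈ 𝒜 N := by
  induction N with
  | zero =>
    intro i j
    rw [pow_zero, Matrix.one_apply]
    split_ifs
    exacts [hone, Submodule.zero_mem _]
  | succ N ih =>
    rw [pow_succ]
    exact mul_mem_graded 𝒜 hgmul ih hM

theorem transpose_mul_of_graded
    {A : Type*} [Ring A] [Algebra ℚ A] (𝒜 : ℕ → Submodule ℚ A)
    (hcomm : ∀ (m n : ℕ), ∀ a ∈ 𝒜 m, ∀ b ∈ 𝒜 n,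
      a * b = ((-1 : ℚ) ^ (m * n)) • (b * a))
    {k m n : ℕ} {M N : Matrix (Fin k) (Fin k) A}
    (hM : ∀ i j, M i j ∈ 𝒜 m) (hN : ∀ i j, N i j ∈ 𝒜 n) :
    (M * N)ᵀ = ((-1 : ℚ) ^ (m * n)) • (Nᵀ * Mᵀ) := by
  ext i j
  simp only [Matrix.transpose_apply, Matrix.smul_apply, Matrix.mul_apply, Finset.smul_sum]
  exact Finset.sum_congr rfl fun l _ => hcomm m n _ (hM j l) _ (hN l i)

/-- Reversing `N` factors of degree one takes `N.choose 2` transpositions, each contributing a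
sign. -/
theorem transpose_pow_of_graded
    {A : Type*} [Ring A] [Algebra ℚ A] (𝒜 : ℕ → Submodule ℚ A)
    (hone : (1 : A) ∈ 𝒜 0)
    (hgmul : ∀ (m n : ℕ), ∀ a ∈ 𝒜 m, ∀ b ∈ 𝒜 n, a * b ∈ 𝒜 (m + n))
    (hcomm : ∀ (m n : ℕ), ∀ a ∈ 𝒜 m, ∀ b ∈ 𝒜 n,
      a * b = ((-1 : ℚ) ^ (m * n)) • (b * a))
    {k : ℕ} {M : Matrix (Fin k) (Fin k) A} (hM : ∀ i j, M i j ∈ 𝒜 1) (N : ℕ) :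
    (M ^ N)ᵀ = ((-1 : ℚ) ^ (N.choose 2)) • Mᵀ ^ N := by
  induction N with
  | zero => simp
  | succ N ih =>
    rw [pow_succ, transpose_mul_of_graded 𝒜 hcomm (pow_mem_graded 𝒜 hone hgmul hM N) hM, ih,
      mul_smul_comm, smul_smul, ← pow_succ', ← pow_add, mul_one,
      Nat.choose_succ_succ' N 1, Nat.choose_one_right]

/-- The trace is cyclic, without a sign, when one factor has entries of degree zero. -/
theorem trace_mul_comm_of_graded
    {A : Type*} [Ring A] [Algebra ℚ A] (𝒜 : ℕ → Submodule ℚ A)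
    (hcomm : ∀ (m n : ℕ), ∀ a ∈ 𝒜 m, ∀ b ∈ 𝒜 n,
      a * b = ((-1 : ℚ) ^ (m * n)) • (b * a))
    {k n : ℕ} {M N : Matrix (Fin k) (Fin k) A}
    (hM : ∀ i j, M i j ∈ 𝒜 0) (hN : ∀ i j, N i j ∈ 𝒜 n) :
    Matrix.trace (M * N) = Matrix.trace (N * M) := by
  have h := congrArg Matrix.trace (transpose_mul_of_graded 𝒜 hcomm hM hN)
  rw [Matrix.trace_transpose, zero_mul, pow_zero, one_smul] at h
  rw [h]
  simp only [Matrix.trace, Matrix.diag, Matrix.mul_apply, Matrix.transpose_apply]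
  exact Finset.sum_comm

theorem beta_symmetric_vanishing
    {A : Type*} [Ring A] [Algebra ℚ A]
    (𝒜 : ℕ → Submodule ℚ A)
    (hdecomp : DirectSum.IsInternal 𝒜)
    (hone : (1 : A) ∈ 𝒜 0)
    (hgmul : ∀ (m n : ℕ), ∀ a ∈ 𝒜 m, ∀ b ∈ 𝒜 n, a * b ∈ 𝒜 (m + n))
    (hcomm : ∀ (m n : ℕ), ∀ a ∈ 𝒜 m, ∀ b ∈ 𝒜 n,
      a * b = ((-1 : ℚ) ^ (m * n)) • (b * a))
    (d : A →ₗ[ℚ] A)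
    (hd2 : ∀ a : A, d (d a) = 0)
    (hddeg : ∀ (n : ℕ), ∀ a ∈ 𝒜 n, d a ∈ 𝒜 (n + 1))
    (hleib : ∀ (m : ℕ), ∀ a ∈ 𝒜 m, ∀ b : A,
      d (a * b) = d a * b + ((-1 : ℚ) ^ m) • (a * d b))
    {k : ℕ} (X Y : Matrix (Fin k) (Fin k) A)
    (hX0 : ∀ i j, X i j ∈ 𝒜 0) (hY0 : ∀ i j, Y i j ∈ 𝒜 0)
    (hXY : X * Y = 1) (hYX : Y * X = 1)
    (hXsymm : Xᵀ = X) :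
    ∀ n : ℕ, Matrix.trace ((Y * X.map (fun a => d a)) ^ (4 * n + 3)) = 0 := by
  intro n
  set D : Matrix (Fin k) (Fin k) A := X.map (fun a => d a) with hD
  have hD1 : ∀ i j, D i j ∈ 𝒜 1 := fun i j => hddeg 0 _ (hX0 i j)
  have hDsymm : Dᵀ = D := by rw [hD, ← Matrix.transpose_map, hXsymm]
  have hYsymm : Yᵀ = Y := by
    have h := transpose_mul_of_graded 𝒜 hcomm hX0 hY0
    rw [hXY, Matrix.transpose_one, hXsymm, zero_mul, pow_zero, one_smul] at h
    exact left_inv_eq_right_inv h.symm hXY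
  have hμ : ∀ i j, (Y * D) i j ∈ 𝒜 1 := by
    simpa using mul_mem_graded 𝒜 hgmul hY0 hD1
  have hμT : (Y * D)ᵀ = D * Y := by
    rw [transpose_mul_of_graded 𝒜 hcomm hY0 hD1, zero_mul, pow_zero, one_smul, hDsymm, hYsymm]
  have hcyc (N : ℕ) : Matrix.trace ((D * Y) ^ (N + 1)) = Matrix.trace ((Y * D) ^ (N + 1)) := by
    -- `(D * Y) ^ (N + 1) = (D * (Y * D) ^ N) * Y`, and the last factor `Y` moves to the front.
    have hs : ∀ N : ℕ, (D * Y) ^ N * D = D * (Y * D) ^ N := fun N =>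
      (SemiconjBy.pow_right (show SemiconjBy D (Y * D) (D * Y) from
        (mul_assoc D Y D).symm) N).eq.symm
    rw [pow_succ (D * Y), ← mul_assoc, hs, pow_succ' (Y * D), mul_assoc Y]
    exact (trace_mul_comm_of_graded 𝒜 hcomm hY0
      (mul_mem_graded 𝒜 hgmul hD1 (pow_mem_graded 𝒜 hone hgmul hμ _))).symm
  have hodd : Odd ((4 * n + 3).choose 2) := by
    have h : (4 * n + 3).choose 2 = (4 * n + 3) * (2 * n + 1) := by
      rw [Nat.choose_two_right]
      rw [show 4 * n + 3 - 1 = (2 * n + 1) * 2 by omega, ← mul_assoc,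
        Nat.mul_div_cancel _ two_pos]
    rw [h]
    exact Odd.mul ⟨2 * n + 1, by ring⟩ ⟨n, rfl⟩
  have h := congrArg Matrix.trace (transpose_pow_of_graded 𝒜 hone hgmul hcomm hμ (4 * n + 3))
  rw [Matrix.trace_transpose, hμT, hodd.neg_one_pow, Matrix.trace_smul, hcyc (4 * n + 2), neg_one_smul] at h
  have : IsAddTorsionFree A := IsAddTorsionFree.of_module_rat A
  exact self_eq_neg.mp h
end

section
/- For every k ≥ 1, the invariant traces of the Laplacian and the dual Laplacian agree: β^{4k+1}_{Λ} = β^{4k+1}_{L}, where Λ = Hᵀ·D·H and L = ε·D⁻¹·εᵀ are assumed invertible over A⁰. (More generally, β^n_{L} = (−1)^{n+1} β^n_{Λ} for all n > 1.) -/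
/-!
Write `Λ = Hᵀ D H`, `L = ε D⁻¹ εᵀ`, `α = D⁻¹ dD`, and put
`p = H Λ⁻¹ Hᵀ D` and `q = D⁻¹ εᵀ L⁻¹ ε`.

* `p + q = 1` (`projections_sum`): `p` and `q` are the complementary projections attached to the
  decomposition of `A^E` into the images of `H` and `D⁻¹ εᵀ`.
* Constant and degree-zero matrices can be moved cyclically in a trace (`trace_pow_cyclic`). As
  `dΛ = Hᵀ dD H` and `dL = -ε (α D⁻¹) εᵀ`, this gives
  `β^n_Λ = tr ((p α)^n)` and `β^n_L = (-1)^n tr ((q α)^n)`.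
* The matrix `α` is diagonal with entries of degree one, so `α² = 0`. With `X = p α` and `Y = q α`,
  this reads `X X = -X Y`, whence `X^(k+1) = (-1)^k X Y^k`. For odd `n > 1` it follows that
  `tr X^n + tr Y^n = tr (α Y^(n-1))`, and moving the last factor `α` of `Y^(n-1)` to the front
  produces `α² = 0`. For even `n` both traces vanish by graded cyclicity. Hence
  `tr Y^n = -tr X^n` for all `n > 1` (`trace_pow_complement`).
-/

open Matrix

section GradedTrace

variable {A : Type*} [Ring A] [Algebra ℚ A] {𝒜 : ℕ → Submodule ℚ A}

lemma matrix_mul_mem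
    (hgmul : ∀ (m n : ℕ), ∀ a ∈ 𝒜 m, ∀ b ∈ 𝒜 n, a * b ∈ 𝒜 (m + n))
    {I J K : Type*} [Fintype J] {m n : ℕ} {M : Matrix I J A} {N : Matrix J K A}
    (hM : ∀ i j, M i j ∈ 𝒜 m) (hN : ∀ i j, N i j ∈ 𝒜 n) (i : I) (k : K) :
    (M * N) i k ∈ 𝒜 (m + n) := by
  rw [Matrix.mul_apply]
  exact Submodule.sum_mem _ fun j _ => hgmul m n _ (hM i j) _ (hN j k)

lemma matrix_pow_mem
    (hone : (1 : A) ∈ 𝒜 0)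
    (hgmul : ∀ (m n : ℕ), ∀ a ∈ 𝒜 m, ∀ b ∈ 𝒜 n, a * b ∈ 𝒜 (m + n))
    {I : Type*} [Fintype I] [DecidableEq I] {M : Matrix I I A}
    (hM : ∀ i j, M i j ∈ 𝒜 1) (n : ℕ) : ∀ i j, (M ^ n) i j ∈ 𝒜 n := by
  induction n with
  | zero =>
    intro i j
    rw [pow_zero, Matrix.one_apply]
    split_ifs
    · exact hone
    · exact Submodule.zero_mem _
  | succ n ih =>
    rw [pow_succ]
    exact matrix_mul_mem hgmul ih hM

/-- Graded cyclicity of the trace. -/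
lemma trace_mul_graded
    (hcomm : ∀ (m n : ℕ), ∀ a ∈ 𝒜 m, ∀ b ∈ 𝒜 n, a * b = ((-1 : ℚ) ^ (m * n)) • (b * a))
    {I J : Type*} [Fintype I] [Fintype J] {m n : ℕ} {M : Matrix I J A} {N : Matrix J I A}
    (hM : ∀ i j, M i j ∈ 𝒜 m) (hN : ∀ i j, N i j ∈ 𝒜 n) :
    trace (M * N) = ((-1 : ℚ) ^ (m * n)) • trace (N * M) := by
  simp only [trace, diag_apply, Matrix.mul_apply, Finset.smul_sum]
  rw [Finset.sum_comm]
  exact Finset.sum_congr rfl fun j _ => Finset.sum_congr rfl fun i _ =>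
    hcomm m n _ (hM i j) _ (hN j i)

lemma mul_pow_succ_cyclic {R : Type*} [Ring R] {I J : Type*} [Fintype I] [DecidableEq I]
    [Fintype J] [DecidableEq J]
    (M : Matrix I J R) (N : Matrix J I R) (k : ℕ) :
    (M * N) ^ (k + 1) = M * (N * M) ^ k * N := by
  induction k with
  | zero => simp
  | succ k ih =>
    rw [pow_succ, ih, pow_succ]
    simp only [Matrix.mul_assoc]

/-- A degree-zero factor moves cyclically through the trace of a power. The trace of the zeroth
power is the size of the matrix, so positivity of the exponent matters. -/
lemma trace_pow_cyclic
    (hone : (1 : A) ∈ 𝒜 0)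
    (hgmul : ∀ (m n : ℕ), ∀ a ∈ 𝒜 m, ∀ b ∈ 𝒜 n, a * b ∈ 𝒜 (m + n))
    (hcomm : ∀ (m n : ℕ), ∀ a ∈ 𝒜 m, ∀ b ∈ 𝒜 n, a * b = ((-1 : ℚ) ^ (m * n)) • (b * a))
    {I J : Type*} [Fintype I] [DecidableEq I] [Fintype J] [DecidableEq J]
    {M : Matrix I J A} {N : Matrix J I A}
    (hM : ∀ i j, M i j ∈ 𝒜 1) (hN : ∀ i j, N i j ∈ 𝒜 0) {n : ℕ} (hn : 0 < n) :
    trace ((M * N) ^ n) = trace ((N * M) ^ n) := by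
  obtain ⟨k, rfl⟩ : ∃ k, n = k + 1 := ⟨n - 1, by omega⟩
  have hNM : ∀ i j, (N * M) i j ∈ 𝒜 1 := fun i j => by
    simpa using matrix_mul_mem hgmul hN hM i j
  rw [mul_pow_succ_cyclic,
    trace_mul_graded hcomm (matrix_mul_mem hgmul hM (matrix_pow_mem hone hgmul hNM k)) hN,
    mul_zero, pow_zero, one_smul, ← Matrix.mul_assoc, ← pow_succ']

lemma eq_zero_of_eq_neg_rat {a : A} (h : a = -a) : a = 0 := by
  have h2 : (2 : ℚ) • a = 0 := by
    rw [two_smul]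
    nth_rewrite 1 [h]
    exact neg_add_cancel _
  exact (smul_eq_zero.mp h2).resolve_left two_ne_zero

lemma trace_pow_even
    (hone : (1 : A) ∈ 𝒜 0)
    (hgmul : ∀ (m n : ℕ), ∀ a ∈ 𝒜 m, ∀ b ∈ 𝒜 n, a * b ∈ 𝒜 (m + n))
    (hcomm : ∀ (m n : ℕ), ∀ a ∈ 𝒜 m, ∀ b ∈ 𝒜 n, a * b = ((-1 : ℚ) ^ (m * n)) • (b * a))
    {I : Type*} [Fintype I] [DecidableEq I] {M : Matrix I I A}
    (hM : ∀ i j, M i j ∈ 𝒜 1) {n : ℕ} (hn : 0 < n) (he : Even n) : trace (M ^ n) = 0 := by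
  obtain ⟨k, rfl⟩ : ∃ k, n = k + 1 := ⟨n - 1, by omega⟩
  have hk : Odd k := by
    rcases Nat.even_or_odd k with h | h
    · exact absurd he (by simpa [Nat.even_add_one] using h)
    · exact h
  have h := trace_mul_graded hcomm (matrix_pow_mem hone hgmul hM k) hM
  rw [← pow_succ, ← pow_succ', mul_one, hk.neg_one_pow, neg_one_smul] at h
  exact eq_zero_of_eq_neg_rat h

/-- If `α² = 0` and `p + q = 1`, with `α` odd and `p`, `q` of degree zero, the traces of the
`n`-th powers of the two compressions `p α` and `q α` are opposite for `n > 1`. -/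
lemma trace_pow_complement
    (hone : (1 : A) ∈ 𝒜 0)
    (hgmul : ∀ (m n : ℕ), ∀ a ∈ 𝒜 m, ∀ b ∈ 𝒜 n, a * b ∈ 𝒜 (m + n))
    (hcomm : ∀ (m n : ℕ), ∀ a ∈ 𝒜 m, ∀ b ∈ 𝒜 n, a * b = ((-1 : ℚ) ^ (m * n)) • (b * a))
    {I : Type*} [Fintype I] [DecidableEq I] {p q α : Matrix I I A}
    (hp : ∀ i j, p i j ∈ 𝒜 0) (hq : ∀ i j, q i j ∈ 𝒜 0) (hα : ∀ i j, α i j ∈ 𝒜 1)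
    (hpq : p + q = 1) (hαα : α * α = 0) {n : ℕ} (hn : 1 < n) :
    trace ((q * α) ^ n) = -trace ((p * α) ^ n) := by
  have hX : ∀ i j, (p * α) i j ∈ 𝒜 1 := fun i j => by
    simpa using matrix_mul_mem hgmul hp hα i j
  have hY : ∀ i j, (q * α) i j ∈ 𝒜 1 := fun i j => by
    simpa using matrix_mul_mem hgmul hq hα i j
  rcases Nat.even_or_odd n with he | ho
  · rw [trace_pow_even hone hgmul hcomm hX (by omega) he,
      trace_pow_even hone hgmul hcomm hY (by omega) he, neg_zero]
  · obtain ⟨m, rfl⟩ : ∃ m, n = 2 * m + 3 := by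
      obtain ⟨m, rfl⟩ := ho
      exact ⟨m - 1, by omega⟩
    have hsum : p * α + q * α = α := by rw [← add_mul, hpq, one_mul]
    generalize hXd : p * α = X at *
    generalize hYd : q * α = Y at *
    have hXα : X * α = 0 := by rw [← hXd, mul_assoc, hαα, mul_zero]
    have hXX : X * X = -(X * Y) := by
      rw [eq_neg_iff_add_eq_zero, ← mul_add, hsum, hXα]
    have hpow : ∀ k : ℕ, X ^ (k + 1) = (-1) ^ k * (X * Y ^ k) := by
      intro k
      induction k with
      | zero => simp
      | succ k ih =>
        have hc : X * (-1) ^ k = (-1) ^ k * X :=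
          ((Commute.neg_one_right X).pow_right k).eq
        rw [pow_succ', ih, ← mul_assoc, hc, mul_assoc, ← mul_assoc X X, hXX, pow_succ' Y,
          pow_succ]
        noncomm_ring
    have h1 : X ^ (2 * m + 3) = X * Y ^ (2 * m + 2) := by
      rw [hpow (2 * m + 2), Even.neg_one_pow ⟨m + 1, by ring⟩, one_mul]
    have h2 : X ^ (2 * m + 3) + Y ^ (2 * m + 3) = α * Y ^ (2 * m + 2) := by
      rw [h1, pow_succ' Y (2 * m + 2), ← add_mul, hsum]
    have h3 : trace (α * Y ^ (2 * m + 2)) = 0 := by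
      have hZ : ∀ i j, (α * (Y ^ (2 * m + 1) * q)) i j ∈ 𝒜 (2 * m + 2) := fun i j => by
        have := matrix_mul_mem hgmul hα
          (matrix_mul_mem hgmul (matrix_pow_mem hone hgmul hY (2 * m + 1)) hq) i j
        rwa [show 1 + (2 * m + 1 + 0) = 2 * m + 2 by ring] at this
      have h4 : α * Y ^ (2 * m + 2) = α * (Y ^ (2 * m + 1) * q) * α := by
        rw [pow_succ Y (2 * m + 1)]
        nth_rewrite 2 [← hYd]
        simp only [mul_assoc]
      rw [h4, trace_mul_graded hcomm hZ hα, ← mul_assoc, hαα, zero_mul, trace_zero, smul_zero]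
    rw [← h2, trace_add] at h3
    exact eq_neg_of_add_eq_zero_right h3

end GradedTrace

lemma exists_left_inverse_of_cols {I J : Type*} [Fintype I] [Fintype J] [DecidableEq I]
    [DecidableEq J] (M : Matrix I J ℚ)
    (hM : LinearIndependent ℚ fun j : J => (fun i : I => M i j)) :
    ∃ G : Matrix J I ℚ, G * M = 1 := by
  obtain ⟨g, hg⟩ := LinearMap.exists_leftInverse_of_injective (Matrix.toLin' M)
    (LinearMap.ker_eq_bot.mpr (Matrix.mulVec_injective_iff.mpr hM))
  refine ⟨LinearMap.toMatrix' g, ?_⟩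
  rw [← LinearMap.toMatrix'_toLin' M, ← LinearMap.toMatrix'_comp, hg, LinearMap.toMatrix'_id]

/-- A short exact sequence `H`, `ε` of rational matrices splits: with a right inverse `K` of `ε`
and a left inverse `G` of `H` that kills `K`, the square matrices `(H | K)` and `(G ; ε)` are
inverse to each other. -/
lemma exists_splitting {E B V' : Type*} [Fintype E] [Fintype B] [Fintype V']
    [DecidableEq E] [DecidableEq B] [DecidableEq V']
    (hcard : Fintype.card B + Fintype.card V' = Fintype.card E)
    (H : Matrix E B ℚ) (ε : Matrix V' E ℚ)
    (hH : LinearIndependent ℚ fun b : B => (fun e : E => H e b))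
    (hε : LinearIndependent ℚ fun v : V' => ε v) (hεH : ε * H = 0) :
    ∃ (G : Matrix B E ℚ) (K : Matrix E V' ℚ), H * G + K * ε = 1 := by
  obtain ⟨G₀, hG₀⟩ := exists_left_inverse_of_cols H hH
  obtain ⟨K', hK'⟩ := exists_left_inverse_of_cols εᵀ hε
  obtain ⟨K, hK⟩ : ∃ K : Matrix E V' ℚ, ε * K = 1 :=
    ⟨K'ᵀ, by simpa using congrArg Matrix.transpose hK'⟩
  -- Correct the left inverse of `H` so that it kills `K`.
  refine ⟨G₀ * (1 - K * ε), K, ?_⟩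
  have h1 : G₀ * (1 - K * ε) * H = 1 := by
    rw [Matrix.mul_assoc, Matrix.sub_mul, Matrix.mul_assoc K, hεH]
    simpa using hG₀
  have h2 : G₀ * (1 - K * ε) * K = 0 := by
    rw [Matrix.mul_assoc, Matrix.sub_mul, Matrix.mul_assoc K, hK]
    simp
  have h3 : fromRows (G₀ * (1 - K * ε)) ε * fromCols H K = 1 := by
    rw [fromRows_mul_fromCols, h1, h2, hεH, hK, fromBlocks_one]
  have h4 := (Matrix.mul_eq_one_comm_of_card_eq (B ⊕ V') E ℚ (by simp [hcard])).mp h3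
  rwa [fromCols_mul_fromRows] at h4

/-- The two projections attached to the decomposition of `A^E` into the images of `H` and
`D⁻¹ εᵀ` are complementary. The matrices `G`, `K` split the sequence `H`, `ε`. -/
lemma projections_sum {A : Type*} [Ring A] {E B V' : Type*} [Fintype E] [Fintype B] [Fintype V']
    [DecidableEq E] [DecidableEq B] [DecidableEq V']
    {H : Matrix E B A} {Ht : Matrix B E A} {ε : Matrix V' E A} {εt : Matrix E V' A}
    {G : Matrix B E A} {K : Matrix E V' A} {D Dinv : Matrix E E A}
    {Λinv : Matrix B B A} {Linv : Matrix V' V' A}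
    (hGK : H * G + K * ε = 1) (hεH : ε * H = 0) (hHε : Ht * εt = 0) (hD : D * Dinv = 1)
    (hΛ : Λinv * (Ht * D * H) = 1) (hL : (ε * Dinv * εt) * Linv = 1)
    (hL' : Linv * (ε * Dinv * εt) = 1) :
    H * Λinv * Ht * D + Dinv * εt * Linv * ε = 1 := by
  -- The defect `R` kills the images of `H` and of `D⁻¹ εᵀ`. As `A` is not commutative, the
  -- splitting, rather than a count of dimensions, is used to deduce `R = 0`.
  obtain ⟨R, hR⟩ : ∃ R, R = 1 - (H * Λinv * Ht * D + Dinv * εt * Linv * ε) := ⟨_, rfl⟩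
  have hRH : R * H = 0 := by
    have e : (H * Λinv * Ht * D + Dinv * εt * Linv * ε) * H
        = H * (Λinv * (Ht * D * H)) + Dinv * εt * Linv * (ε * H) := by
      simp only [Matrix.add_mul, Matrix.mul_assoc]
    rw [hR, Matrix.sub_mul, e, hΛ, hεH]
    simp
  have hRε : R * (Dinv * εt) = 0 := by
    have e : (H * Λinv * Ht * D + Dinv * εt * Linv * ε) * (Dinv * εt)
        = H * Λinv * Ht * (D * Dinv) * εt + Dinv * εt * (Linv * (ε * Dinv * εt)) := by
      simp only [Matrix.add_mul, Matrix.mul_assoc]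
    rw [hR, Matrix.sub_mul, e, hD, hL', Matrix.mul_one, Matrix.mul_assoc _ Ht, hHε]
    simp
  have hRK' : R = R * K * ε := by
    calc R = R * (H * G + K * ε) := by rw [hGK, Matrix.mul_one]
      _ = R * H * G + R * K * ε := by simp only [Matrix.mul_add, Matrix.mul_assoc]
      _ = R * K * ε := by rw [hRH, Matrix.zero_mul, zero_add]
  have hRK : R * K = 0 := by
    calc R * K = R * K * ((ε * Dinv * εt) * Linv) := by rw [hL, Matrix.mul_one]
      _ = R * K * ε * (Dinv * εt) * Linv := by simp only [Matrix.mul_assoc]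
      _ = 0 := by rw [← hRK', hRε, Matrix.zero_mul]
  rw [hRK, Matrix.zero_mul, hR, sub_eq_zero] at hRK'
  exact hRK'.symm

/-- A `ℚ`-linear map commutes with multiplication by constant matrices. -/
lemma map_const_mul_mul {A : Type*} [Ring A] [Algebra ℚ A] (d : A →ₗ[ℚ] A)
    {I J K L : Type*} [Fintype J] [Fintype K]
    (P : Matrix I J ℚ) (M : Matrix J K A) (Q : Matrix K L ℚ) :
    (P.map (fun q : ℚ => algebraMap ℚ A q) * M * Q.map (fun q : ℚ => algebraMap ℚ A q)).map
        (fun a => d a) =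
      P.map (fun q : ℚ => algebraMap ℚ A q) * M.map (fun a => d a) *
        Q.map (fun q : ℚ => algebraMap ℚ A q) := by
  ext i l
  simp only [Matrix.map_apply, Matrix.mul_apply, map_sum, ← Algebra.commutes, ← Algebra.smul_def,
    map_smul]

theorem beta_laplacian_eq_beta_dual_laplacian
    {A : Type*} [Ring A] [Algebra ℚ A]
    (𝒜 : ℕ → Submodule ℚ A)
    (hdecomp : DirectSum.IsInternal 𝒜)
    (hone : (1 : A) ∈ 𝒜 0)
    (hgmul : ∀ (m n : ℕ), ∀ a ∈ 𝒜 m, ∀ b ∈ 𝒜 n, a * b ∈ 𝒜 (m + n))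
    (hcomm : ∀ (m n : ℕ), ∀ a ∈ 𝒜 m, ∀ b ∈ 𝒜 n,
      a * b = ((-1 : ℚ) ^ (m * n)) • (b * a))
    (d : A →ₗ[ℚ] A)
    (hd2 : ∀ a : A, d (d a) = 0)
    (hddeg : ∀ (n : ℕ), ∀ a ∈ 𝒜 n, d a ∈ 𝒜 (n + 1))
    (hleib : ∀ (m : ℕ), ∀ a ∈ 𝒜 m, ∀ b : A,
      d (a * b) = d a * b + ((-1 : ℚ) ^ m) • (a * d b))
    {E B V' : Type*} [Fintype E] [Fintype B] [Fintype V'] [DecidableEq E] [DecidableEq B] [DecidableEq V']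
    (hcard : Fintype.card B + Fintype.card V' = Fintype.card E)
    (H : Matrix E B ℚ) (ε : Matrix V' E ℚ)
    (hH : LinearIndependent ℚ fun b : B => (fun e : E => H e b))
    (hε : LinearIndependent ℚ fun v : V' => ε v)
    (hεH : ε * H = 0)
    (x xinv : E → A)
    (hx0 : ∀ e, x e ∈ 𝒜 0) (hxinv0 : ∀ e, xinv e ∈ 𝒜 0)
    (hx : ∀ e, x e * xinv e = 1) (hx' : ∀ e, xinv e * x e = 1)
    (Λinv : Matrix B B A) (hΛinv0 : ∀ i j, Λinv i j ∈ 𝒜 0)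
    (hΛΛinv : ((H.map (fun q : ℚ => algebraMap ℚ A q))ᵀ * Matrix.diagonal x * (H.map (fun q : ℚ => algebraMap ℚ A q))) * Λinv = 1) (hΛinvΛ : Λinv * ((H.map (fun q : ℚ => algebraMap ℚ A q))ᵀ * Matrix.diagonal x * (H.map (fun q : ℚ => algebraMap ℚ A q))) = 1)
    (Linv : Matrix V' V' A) (hLinv0 : ∀ i j, Linv i j ∈ 𝒜 0)
    (hLLinv : ((ε.map (fun q : ℚ => algebraMap ℚ A q)) * Matrix.diagonal xinv * (ε.map (fun q : ℚ => algebraMap ℚ A q))ᵀ) * Linv = 1) (hLinvL : Linv * ((ε.map (fun q : ℚ => algebraMap ℚ A q)) * Matrix.diagonal xinv * (ε.map (fun q : ℚ => algebraMap ℚ A q))ᵀ) = 1) :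
    (∀ k : ℕ, 1 ≤ k →
      Matrix.trace ((Λinv * ((H.map (fun q : ℚ => algebraMap ℚ A q))ᵀ * Matrix.diagonal x * (H.map (fun q : ℚ => algebraMap ℚ A q))).map (fun a => d a)) ^ (4 * k + 1)) = Matrix.trace ((Linv * ((ε.map (fun q : ℚ => algebraMap ℚ A q)) * Matrix.diagonal xinv * (ε.map (fun q : ℚ => algebraMap ℚ A q))ᵀ).map (fun a => d a)) ^ (4 * k + 1))) ∧
    (∀ n : ℕ, 1 < n →
      Matrix.trace ((Linv * ((ε.map (fun q : ℚ => algebraMap ℚ A q)) * Matrix.diagonal xinv * (ε.map (fun q : ℚ => algebraMap ℚ A q))ᵀ).map (fun a => d a)) ^ n) = (-1 : A) ^ (n + 1) * Matrix.trace ((Λinv * ((H.map (fun q : ℚ => algebraMap ℚ A q))ᵀ * Matrix.diagonal x * (H.map (fun q : ℚ => algebraMap ℚ A q))).map (fun a => d a)) ^ n)) := by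
  have hmain : ∀ n : ℕ, 1 < n →
      Matrix.trace ((Linv * ((ε.map (fun q : ℚ => algebraMap ℚ A q)) * Matrix.diagonal xinv * (ε.map (fun q : ℚ => algebraMap ℚ A q))ᵀ).map (fun a => d a)) ^ n) = (-1 : A) ^ (n + 1) * Matrix.trace ((Λinv * ((H.map (fun q : ℚ => algebraMap ℚ A q))ᵀ * Matrix.diagonal x * (H.map (fun q : ℚ => algebraMap ℚ A q))).map (fun a => d a)) ^ n) := by
    intro n hn
    have hconst : ∀ q : ℚ, algebraMap ℚ A q ∈ 𝒜 0 := fun q => by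
      rw [Algebra.algebraMap_eq_smul_one]
      exact Submodule.smul_mem _ _ hone
    have hd1 : d 1 = 0 := by
      have h := hleib 0 1 hone 1
      simpa using h
    have hdxinv : ∀ e, d (xinv e) = -(xinv e * d (x e) * xinv e) := fun e => by
      have h := hleib 0 (xinv e) (hxinv0 e) (x e)
      rw [hx', hd1, pow_zero, one_smul] at h
      calc d (xinv e) = d (xinv e) * x e * xinv e := by rw [mul_assoc, hx, mul_one]
        _ = -(xinv e * d (x e) * xinv e) := by
          rw [eq_neg_of_add_eq_zero_left h.symm, neg_mul]
    have hHε : H.transpose * ε.transpose = 0 := by rw [← Matrix.transpose_mul, hεH]; simp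
    obtain ⟨G, K, hGK⟩ := exists_splitting hcard H ε hH hε hεH
    -- Transport the relations between rational matrices to `A`.
    have hGK' := congrArg (fun M => M.map (algebraMap ℚ A)) hGK
    have hεH' := congrArg (fun M => M.map (algebraMap ℚ A)) hεH
    have hHε' := congrArg (fun M => M.map (algebraMap ℚ A)) hHε
    simp only [Matrix.map_mul, Matrix.map_add _ (map_add (algebraMap ℚ A)),
      Matrix.map_zero _ (map_zero (algebraMap ℚ A)),
      Matrix.map_one _ (map_zero (algebraMap ℚ A)) (map_one (algebraMap ℚ A))]
      at hGK' hεH' hHε'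
    have hDD : diagonal x * diagonal xinv = 1 := by
      rw [diagonal_mul_diagonal, ← diagonal_one]
      exact congrArg diagonal (funext hx)
    have hpq := projections_sum hGK' hεH' hHε' hDD hΛinvΛ hLLinv hLinvL
    have hdΛ := map_const_mul_mul d Hᵀ (diagonal x) H
    have hdL := map_const_mul_mul d ε (diagonal xinv) εᵀ
    rw [diagonal_map (map_zero d)] at hdΛ hdL
    have hDα : diagonal (fun e => d (x e)) =
        diagonal x * diagonal (fun e => xinv e * d (x e)) := by
      rw [diagonal_mul_diagonal]
      exact congrArg diagonal (funext fun e => by rw [← mul_assoc, hx, one_mul])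
    have hdDinv : diagonal (fun e => d (xinv e)) =
        -(diagonal (fun e => xinv e * d (x e)) * diagonal xinv) := by
      rw [diagonal_mul_diagonal, diagonal_neg]
      exact congrArg diagonal (funext hdxinv)
    have hdiag : ∀ (m : ℕ) (y : E → A), (∀ e, y e ∈ 𝒜 m) → ∀ i j, diagonal y i j ∈ 𝒜 m := by
      intro m y hy i j
      rw [diagonal_apply]
      split_ifs
      · exact hy i
      · exact Submodule.zero_mem _
    have hα1 : ∀ e, xinv e * d (x e) ∈ 𝒜 1 := fun e => by
      simpa using hgmul 0 1 _ (hxinv0 e) _ (hddeg 0 _ (hx0 e))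
    have hα := hdiag 1 _ hα1
    have hαα : diagonal (fun e => xinv e * d (x e)) * diagonal (fun e => xinv e * d (x e))
        = 0 := by
      rw [diagonal_mul_diagonal, ← diagonal_zero]
      refine congrArg diagonal (funext fun e => ?_)
      have h := hcomm 1 1 _ (hα1 e) _ (hα1 e)
      rw [mul_one, pow_one, neg_one_smul] at h
      exact eq_zero_of_eq_neg_rat h
    rw [show (diagonal fun m => d (x m)) = _ from hDα] at hdΛ
    rw [show (diagonal fun m => d (xinv m)) = _ from hdDinv] at hdL
    have hHc : ∀ i j, (H.map (fun q : ℚ => algebraMap ℚ A q)) i j ∈ 𝒜 0 := fun i j => hconst _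
    have hHt : ∀ i j, (H.map (fun q : ℚ => algebraMap ℚ A q))ᵀ i j ∈ 𝒜 0 := fun i j => hconst _
    have hεc : ∀ i j, (ε.map (fun q : ℚ => algebraMap ℚ A q)) i j ∈ 𝒜 0 := fun i j => hconst _
    have hεt : ∀ i j, (ε.map (fun q : ℚ => algebraMap ℚ A q))ᵀ i j ∈ 𝒜 0 := fun i j => hconst _
    rw [Matrix.transpose_map] at hdΛ hdL
    rw [hdΛ, hdL]
    have hpq' : H.map (fun q : ℚ => algebraMap ℚ A q) * Λinv *
        (H.map (fun q : ℚ => algebraMap ℚ A q))ᵀ * diagonal x +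
        diagonal xinv * (ε.map (fun q : ℚ => algebraMap ℚ A q))ᵀ * Linv *
        ε.map (fun q : ℚ => algebraMap ℚ A q) = 1 := hpq
    generalize H.map (fun q : ℚ => algebraMap ℚ A q) = Hc at *
    generalize ε.map (fun q : ℚ => algebraMap ℚ A q) = εc at *
    generalize diagonal (fun e => xinv e * d (x e)) = α at *
    have hp : ∀ i j, (Hc * Λinv * Hcᵀ * diagonal x) i j ∈ 𝒜 0 :=
      matrix_mul_mem hgmul (matrix_mul_mem hgmul (matrix_mul_mem hgmul hHc hΛinv0) hHt)
        (hdiag 0 x hx0)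
    have hDε : ∀ i j, (diagonal xinv * εcᵀ) i j ∈ 𝒜 0 :=
      matrix_mul_mem hgmul (hdiag 0 xinv hxinv0) hεt
    have hq : ∀ i j, (diagonal xinv * εcᵀ * Linv * εc) i j ∈ 𝒜 0 :=
      matrix_mul_mem hgmul (matrix_mul_mem hgmul hDε hLinv0) hεc
    have hΛ1 : ∀ i j, (Λinv * Hcᵀ * diagonal x * α) i j ∈ 𝒜 1 :=
      matrix_mul_mem hgmul (matrix_mul_mem hgmul (matrix_mul_mem hgmul hΛinv0 hHt)
        (hdiag 0 x hx0)) hα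
    have hL1 : ∀ i j, (Linv * εc * α) i j ∈ 𝒜 1 :=
      matrix_mul_mem hgmul (matrix_mul_mem hgmul hLinv0 hεc) hα
    -- Isolate the degree-zero factors `H` and `D⁻¹ εᵀ` that are moved around the trace.
    have eΛ : Λinv * (Hcᵀ * (diagonal x * α) * Hc) = Λinv * Hcᵀ * diagonal x * α * Hc := by
      simp only [Matrix.mul_assoc]
    have eL : Linv * (εc * -(α * diagonal xinv) * εcᵀ) =
        -(Linv * εc * α * (diagonal xinv * εcᵀ)) := by
      simp only [Matrix.mul_assoc, Matrix.mul_neg, Matrix.neg_mul]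
    have tΛ := trace_pow_cyclic hone hgmul hcomm hΛ1 hHc (n := n) (by omega)
    have tL := trace_pow_cyclic hone hgmul hcomm hL1 hDε (n := n) (by omega)
    have hpair := trace_pow_complement hone hgmul hcomm hp hq hα hpq' hαα hn
    have eΛ' : Hc * (Λinv * Hcᵀ * diagonal x * α) = Hc * Λinv * Hcᵀ * diagonal x * α := by
      simp only [Matrix.mul_assoc]
    have eL' : diagonal xinv * εcᵀ * (Linv * εc * α) =
        diagonal xinv * εcᵀ * Linv * εc * α := by
      simp only [Matrix.mul_assoc]
    rw [eΛ'] at tΛ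
    rw [eL'] at tL
    rw [eΛ, eL, tΛ]
    -- The sign `(-1)^n` comes from `d(D⁻¹) = -α D⁻¹`.
    rcases Nat.even_or_odd n with he | ho
    · rw [he.neg_pow, tL, hpair, he.add_one.neg_one_pow, neg_one_mul]
    · rw [ho.neg_pow, trace_neg, tL, hpair, ho.add_one.neg_one_pow, one_mul, neg_neg]
  refine ⟨fun k hk => ?_, hmain⟩
  rw [hmain (4 * k + 1) (by omega), Even.neg_one_pow ⟨2 * k + 1, by ring⟩, one_mul]
end
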